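/- arXiv:1003.2605 — 2 statements merged into one kernel-verified Lean document; each statement's English description precedes it below -/
import Mathlib

section
/- Let {S_i}_{i=1}^l be the affine IFS S_i(x) = A x + c_i on ℝ^d with ‖A‖ < 1, K its attractor, and π : Σ → K the canonical projection. Then for every f ∈ C(K), liminf_{n→∞} (1/n) log Σ_{Q ∈ Q_n, Q∩K ≠ ∅} sup_{α ∈ π^{-1}(Q∩K)} exp((S_n f∘π)(α)) ≥ sup { h_π(σ,m) + ∫ f∘π dm : m ∈ M_σ(Σ) }. -/
/-! The proof is the classical estimate of the entropy of a finite partition by the logarithm of a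
partition function, with the partitions `𝒬_n` replaced by randomly translated copies of
themselves.

Write `B = A⁻¹` and `X_{n,t}(x) = ⌊Bⁿ π(x) + t⌋ ∈ ℤ^d`, so that the fibres of `X_{n,0}` are the
sets `π⁻¹(Q)`, `Q ∈ 𝒬_n`. Since `π(x) = A π(σx) + c_{x₀}`, on the cylinder `x₀ = i` the variable
`X_{n+1,t}` equals `X_{n,s} ∘ σ` with `s = t + B^{n+1} c_i`. The joint entropy of `P` and
`X_{n+1,t}` thus differs from that of `P` and `X_{n,t} ∘ σ` only by a translation of `t` on each
cylinder. Averaging over `t` in the torus `ℝ^d/ℤ^d` removes that discrepancy: with `G n` the mean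
over `t` of `H_μ(X_{n,t})`, the chain rule and the invariance of `μ` give the exact identity
(`entropy_step`) `G (n+1) + E_t H_μ(P | X_{n+1,t}) = G n + E_t H_μ(P | X_{n,t} ∘ σ)`.

Because `‖A‖ < 1` the cells of `X_{n,t}` are preimages under `π` of sets of diameter at most `‖A‖ⁿ
√d`, and the two conditional entropies converge, uniformly in `t`, to `H_μ(P | π⁻¹γ)` and `H_μ(P |
σ⁻¹π⁻¹γ)` (`condEnt_converge`). Hence `G (n+1) - G n → h_π(σ,μ)`, and by Cesàro summation `G n / n
→ h_π(σ,μ)` (`entropy_div_tendsto`).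

On the other hand each cell of `X_{n,t}` with `t ∈ [0,1)^d` meets at most `2^d` cells of
`X_{n,0}`, so the Gibbs inequality (`gibbs`, `discEntropy_le`) bounds `H_μ(X_{n,t})` by `log (2^d
Z_n) - n ∫ f∘π dμ`, where `Z_n` is the partition function. Dividing by `n` and letting `n → ∞`
gives the theorem. The real-valued `liminf` also requires `log Z_n / n` to be bounded above, which
follows by counting the cubes of `𝒬_n` that meet `K`.
-/

/- Projection pressure for affine IFS (Wang–Chen).
   Statement 1: lower bound in the variational principle. -/

open MeasureTheory Filter Set

noncomputable section

/-- The symbolic space `Σ = {1,…,l}^ℕ`. -/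
abbrev Sig (l : ℕ) := ℕ → Fin l

/-- The left shift `σ` on `Σ`. -/
def shift {l : ℕ} (x : Sig l) : Sig l := fun n => x (n + 1)

/-- First-coordinate cylinder partition `P = {[j] : 1 ≤ j ≤ l}`. -/
def cylP {l : ℕ} : Fin l → Set (Sig l) := fun j => {x | x 0 = j}

/-- Conditional entropy `H_μ(ξ | 𝒜) = ∫ I_μ(ξ|𝒜) dμ` of a finite partition `ξ`
    given a sub-σ-algebra `𝒜`, where
    `I_μ(ξ|𝒜) = -∑_{A ∈ ξ} 1_A · log E_μ(1_A | 𝒜)`. -/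
def condEntropyPart {α : Type*} [MeasurableSpace α] {ι : Type*} [Fintype ι]
    (μ : Measure α) (part : ι → Set α) (m : MeasurableSpace α) : ℝ :=
  ∑ i : ι, ∫ x in part i,
    -Real.log ((μ[(part i).indicator (fun _ => (1 : ℝ)) | m]) x) ∂μ

/-- Projection entropy `h_π(σ,μ) = H_μ(P | σ⁻¹π⁻¹γ) − H_μ(P | π⁻¹γ)`. -/
def projEntropy {l : ℕ} {E : Type*} [mE : MeasurableSpace E]
    (π : Sig l → E) (μ : Measure (Sig l)) : ℝ :=
  condEntropyPart μ cylP (MeasurableSpace.comap (fun x => π (shift x)) mE)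
    - condEntropyPart μ cylP (MeasurableSpace.comap π mE)

/-- `itIm S K x n = S_{x 0} ∘ ⋯ ∘ S_{x (n-1)} (K)`. -/
def itIm {l : ℕ} {E : Type*} (S : Fin l → E → E) (K : Set E) : Sig l → ℕ → Set E
  | _, 0 => K
  | x, n + 1 => S (x 0) '' itIm S K (shift x) n

/-- The half-open unit cube `[0,1)^d + α` of the partition `𝒬` of `ℝ^d`. -/
def cube (d : ℕ) (α : Fin d → ℤ) : Set (EuclideanSpace ℝ (Fin d)) :=
  {x | ∀ i, (α i : ℝ) ≤ x i ∧ x i < (α i : ℝ) + 1}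

/-- Birkhoff sum `S_n g (x) = ∑_{i<n} g(σ^i x)`. -/
def birk {l : ℕ} (g : Sig l → ℝ) (n : ℕ) (x : Sig l) : ℝ :=
  ∑ i ∈ Finset.range n, g (shift^[i] x)

/-- The partition function
`∑_{Q ∈ 𝒬_n, Q ∩ K ≠ ∅} sup_{α ∈ π⁻¹(Q ∩ K)} exp((S_n f∘π)(α))`,
where `𝒬_n = {Aⁿ Q : Q ∈ 𝒬}`; cubes not meeting `K` contribute `0`. -/
def Zsum {d l : ℕ} (A : EuclideanSpace ℝ (Fin d) →L[ℝ] EuclideanSpace ℝ (Fin d))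
    (K : Set (EuclideanSpace ℝ (Fin d))) (π : Sig l → EuclideanSpace ℝ (Fin d))
    (f : EuclideanSpace ℝ (Fin d) → ℝ) (n : ℕ) : ℝ :=
  ∑' α : Fin d → ℤ,
    ⨆ β ∈ π ⁻¹' ((⇑(A ^ n) '' cube d α) ∩ K), Real.exp (birk (fun y => f (π y)) n β)

/-! ### Conditional expectations of indicators and conditional entropy -/

/-- The two usual expressions for the conditional entropy of a set agree: since `g = E(1_s | m)`
is the density of `1_s dμ` on the σ-algebra `m`, integrating `-log g` over `s` amounts to
integrating `-g log g`. -/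
theorem setIntegral_neg_log_condExp {Ω : Type*} {m mΩ : MeasurableSpace Ω} (hm : m ≤ mΩ)
    (μ : Measure Ω) [IsProbabilityMeasure μ] {s : Set Ω} (hs : MeasurableSet s) :
    ∫ x in s, -Real.log ((μ[s.indicator (fun _ => (1 : ℝ)) | m]) x) ∂μ
      = ∫ x, Real.negMulLog ((μ[s.indicator (fun _ => (1 : ℝ)) | m]) x) ∂μ := by
  set u : Ω → ℝ := s.indicator (fun _ => (1 : ℝ)) with hu
  have hui : Integrable u μ := (integrable_const 1).indicator hs
  set g := μ[u | m] with hg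
  have hgm : Measurable[m] g := stronglyMeasurable_condExp.measurable
  have hg0 : ∀ᵐ x ∂μ, 0 ≤ g x :=
    condExp_nonneg (Eventually.of_forall fun x => indicator_nonneg (fun _ _ => zero_le_one) x)
  have hg1 : ∀ᵐ x ∂μ, g x ≤ 1 := by
    have h := condExp_mono (m := m) hui (integrable_const (1 : ℝ))
      (Eventually.of_forall fun x => indicator_le_self' (fun _ _ => zero_le_one) x)
    rw [condExp_const hm] at h
    exact h
  -- on `m`, the measure `1_s dμ` has density `g`
  have htrim : (μ.restrict s).trim hm
      = (μ.withDensity (fun x => ENNReal.ofReal (g x))).trim hm := by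
    refine @Measure.ext _ m _ _ fun t ht => ?_
    rw [trim_measurableSet_eq hm ht, trim_measurableSet_eq hm ht, withDensity_apply _ (hm _ ht),
      Measure.restrict_apply (hm _ ht),
      ← ofReal_integral_eq_lintegral_ofReal integrable_condExp.integrableOn
        (ae_restrict_of_ae hg0), setIntegral_condExp hm hui ht, hu,
      setIntegral_indicator hs]
    simp [measureReal_def]
  have hlm : Measurable[m] fun x => ENNReal.ofReal (-Real.log (g x)) :=
    ((Real.measurable_log.comp hgm).neg).ennreal_ofReal
  have key : ∫⁻ x in s, ENNReal.ofReal (-Real.log (g x)) ∂μ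
      = ∫⁻ x, ENNReal.ofReal (Real.negMulLog (g x)) ∂μ := by
    rw [← lintegral_trim hm hlm, htrim, lintegral_trim hm hlm,
      lintegral_withDensity_eq_lintegral_mul _ (hgm.mono hm le_rfl).ennreal_ofReal
        (hlm.mono hm le_rfl)]
    refine lintegral_congr_ae ?_
    filter_upwards [hg0] with x hx
    simp only [Pi.mul_apply]
    rw [← ENNReal.ofReal_mul hx, Real.negMulLog]
    ring_nf
  rw [integral_eq_lintegral_of_nonneg_ae, integral_eq_lintegral_of_nonneg_ae, key]
  · filter_upwards [hg0, hg1] with x h0 h1 using Real.negMulLog_nonneg h0 h1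
  · exact (Real.continuous_negMulLog.measurable.comp (hgm.mono hm le_rfl)).aestronglyMeasurable
  · refine ae_restrict_of_ae ?_
    filter_upwards [hg0, hg1] with x h0 h1
    simpa using Real.log_nonpos h0 h1
  · exact ((Real.measurable_log.comp (hgm.mono hm le_rfl)).neg).aestronglyMeasurable

theorem condExp_indicator_mem_Icc {Ω : Type*} {m mΩ : MeasurableSpace Ω} (hm : m ≤ mΩ)
    (μ : Measure Ω) [IsProbabilityMeasure μ] {s : Set Ω} (hs : MeasurableSet s) :
    ∀ᵐ x ∂μ, (μ[s.indicator (fun _ => (1 : ℝ)) | m]) x ∈ Icc (0 : ℝ) 1 := by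
  have hui : Integrable (s.indicator (fun _ => (1 : ℝ))) μ := (integrable_const 1).indicator hs
  have hg0 : ∀ᵐ x ∂μ, 0 ≤ (μ[s.indicator (fun _ => (1 : ℝ)) | m]) x :=
    condExp_nonneg (Eventually.of_forall fun x => indicator_nonneg (fun _ _ => zero_le_one) x)
  have h := condExp_mono (m := m) hui (integrable_const (1 : ℝ))
    (Eventually.of_forall fun x => indicator_le_self' (fun _ _ => zero_le_one) x)
  rw [condExp_const hm] at h
  filter_upwards [hg0, h] with x h0 h1 using ⟨h0, h1⟩

/-- For `s = univ`, the Shannon entropy `H_μ(X)` of a discrete random variable `X`. In general,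
the part `∑ₐ -μ(s ∩ {X = a}) log μ(s ∩ {X = a})` of the joint entropy of `X` with a partition that
is carried by the atom `s`. It takes values in `[0, ∞]`; for a probability measure every summand
is nonnegative, so that `ENNReal.ofReal` truncates nothing. -/
def discEntropy {Ω κ : Type*} [MeasurableSpace Ω] (μ : Measure Ω) (s : Set Ω) (X : Ω → κ) :
    ENNReal :=
  ∑' a, ENNReal.ofReal (Real.negMulLog (μ.real (s ∩ X ⁻¹' {a})))

/-- The chain rule inside a single cell of mass `q`, which a partition splits into pieces of mass
`p i` with conditional probabilities `φ i`. -/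
theorem chain_cell {ι : Type*} [Fintype ι] (p φ : ι → ℝ) (q : ℝ) (hp : ∀ i, 0 ≤ p i)
    (hq1 : q ≤ 1) (hsum : ∑ i, p i = q) (hφ : ∀ i, φ i * q = p i) :
    ∑ i, ENNReal.ofReal (Real.negMulLog (p i))
      = ENNReal.ofReal (Real.negMulLog q)
        + ∑ i, ENNReal.ofReal (Real.negMulLog (φ i)) * ENNReal.ofReal q := by
  have hq0 : 0 ≤ q := hsum ▸ Finset.sum_nonneg fun i _ => hp i
  rcases hq0.eq_or_lt with h0 | hqpos
  · have hpz : ∀ i, p i = 0 := fun i => by rw [← hφ i, ← h0, mul_zero]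
    simp [hpz, ← h0]
  have hpq : ∀ i, p i ≤ q := fun i => hsum ▸ Finset.single_le_sum (fun j _ => hp j)
    (Finset.mem_univ i)
  have hφ' : ∀ i, φ i = p i / q := fun i => by rw [← hφ i]; field_simp
  have hφ0 : ∀ i, 0 ≤ φ i := fun i => by rw [hφ']; exact div_nonneg (hp i) hq0
  have hφ1 : ∀ i, φ i ≤ 1 := fun i => by rw [hφ']; exact div_le_one_of_le₀ (hpq i) hq0
  have hφs : ∑ i, φ i = 1 := by
    simp_rw [hφ']; rw [← Finset.sum_div, hsum, div_self hqpos.ne']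
  simp_rw [← ENNReal.ofReal_mul (Real.negMulLog_nonneg (hφ0 _) (hφ1 _))]
  rw [← ENNReal.ofReal_sum_of_nonneg fun i _ =>
      Real.negMulLog_nonneg (hp i) ((hpq i).trans hq1),
    ← ENNReal.ofReal_sum_of_nonneg fun i _ =>
      mul_nonneg (Real.negMulLog_nonneg (hφ0 i) (hφ1 i)) hq0,
    ← ENNReal.ofReal_add (Real.negMulLog_nonneg hq0 hq1) (Finset.sum_nonneg fun i _ =>
      mul_nonneg (Real.negMulLog_nonneg (hφ0 i) (hφ1 i)) hq0)]
  congr 1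
  calc ∑ i, Real.negMulLog (p i)
      = ∑ i, (q * Real.negMulLog (φ i) + φ i * Real.negMulLog q) := by
        refine Finset.sum_congr rfl fun i _ => ?_
        rw [← hφ i, Real.negMulLog_mul]
    _ = _ := by
        rw [Finset.sum_add_distrib, ← Finset.sum_mul, hφs, one_mul, add_comm]
        simp_rw [mul_comm q]

/-- The conditional entropy `H_μ(ξ | m) = ∑_i ∫ -E(1_{ξ_i} | m) log E(1_{ξ_i} | m) dμ` of a finite
partition, as the integral of a bounded function. It agrees with `condEntropyPart`, see
`condEntropyPart_eq`. -/
def condEnt {Ω ι : Type*} [MeasurableSpace Ω] [Fintype ι] (μ : Measure Ω) (part : ι → Set Ω)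
    (m : MeasurableSpace Ω) : ℝ :=
  ∑ i, ∫ x, Real.negMulLog ((μ[(part i).indicator (fun _ => (1 : ℝ)) | m]) x) ∂μ

/-- The chain rule `H(ξ ∨ X) = H(X) + H(ξ | X)` for a finite partition `ξ` and a discrete variable
`X`. -/
theorem chain_rule {Ω ι κ : Type*} [mΩ : MeasurableSpace Ω] [Fintype ι] [Countable κ]
    [mκ : MeasurableSpace κ] [MeasurableSingletonClass κ]
    (μ : Measure Ω) [IsProbabilityMeasure μ] (part : ι → Set Ω)
    (hpm : ∀ i, MeasurableSet (part i)) (hdisj : Pairwise fun i j => Disjoint (part i) (part j))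
    (hcov : ⋃ i, part i = univ) (X : Ω → κ) (hX : Measurable X) :
    ∑ i, discEntropy μ (part i) X
      = discEntropy μ univ X + ENNReal.ofReal (condEnt μ part (mκ.comap X)) := by
  have hm : mκ.comap X ≤ mΩ := hX.comap_le
  have hφ : ∀ i, ∃ φ : κ → ℝ, Measurable φ ∧
      μ[(part i).indicator (fun _ => (1 : ℝ)) | mκ.comap X] = φ ∘ X := fun i => by
    obtain ⟨φ, h1, h2⟩ := (stronglyMeasurable_condExp (μ := μ) (m := mκ.comap X)
      (f := (part i).indicator (fun _ => (1 : ℝ)))).measurable.exists_eq_measurable_comp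
    exact ⟨φ, h1, h2⟩
  choose φ hφm hφ using hφ
  have hXs : ∀ a, MeasurableSet (X ⁻¹' {a}) := fun a => hX (measurableSet_singleton a)
  have hval : ∀ i a, φ i a * μ.real (univ ∩ X ⁻¹' {a}) = μ.real (part i ∩ X ⁻¹' {a}) := by
    intro i a
    have h := setIntegral_condExp hm (μ := μ)
      ((integrable_const (1 : ℝ)).indicator (hpm i)) (s := X ⁻¹' {a})
      ⟨{a}, measurableSet_singleton a, rfl⟩
    rw [setIntegral_congr_fun (g := fun _ => φ i a) (hXs a), setIntegral_const,
      setIntegral_indicator (hpm i), setIntegral_const] at h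
    · simp only [smul_eq_mul, mul_one] at h
      rw [univ_inter, mul_comm, h, inter_comm]
    · intro x hx
      simp only [hφ]
      exact congrArg _ hx
  have hint : ∀ i, ENNReal.ofReal (∫ x, Real.negMulLog
      ((μ[(part i).indicator (fun _ => (1 : ℝ)) | mκ.comap X]) x) ∂μ)
      = ∑' a, ENNReal.ofReal (Real.negMulLog (φ i a)) *
        ENNReal.ofReal (μ.real (univ ∩ X ⁻¹' {a})) := by
    intro i
    have hb := condExp_indicator_mem_Icc hm μ (hpm i)
    rw [hφ i] at hb ⊢
    have hη : Measurable fun a => Real.negMulLog (φ i a) :=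
      Real.continuous_negMulLog.measurable.comp (hφm i)
    rw [ofReal_integral_eq_lintegral_ofReal]
    · simp only [Function.comp_apply]
      rw [← lintegral_map (f := fun a => ENNReal.ofReal (Real.negMulLog (φ i a)))
        hη.ennreal_ofReal hX, lintegral_countable']
      refine tsum_congr fun a => ?_
      rw [Measure.map_apply hX (measurableSet_singleton a), univ_inter, ofReal_measureReal]
    · refine Integrable.of_bound (hη.comp hX).aestronglyMeasurable 1 ?_
      filter_upwards [hb] with x hx
      rw [Real.norm_of_nonneg (Real.negMulLog_nonneg hx.1 hx.2)]
      exact (Real.negMulLog_le_one_sub_self hx.1).trans (by linarith [hx.1])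
    · filter_upwards [hb] with x hx using Real.negMulLog_nonneg hx.1 hx.2
  have hnn : ∀ i, 0 ≤ ∫ x, Real.negMulLog
      ((μ[(part i).indicator (fun _ => (1 : ℝ)) | mκ.comap X]) x) ∂μ := fun i =>
    integral_nonneg_of_ae (by
      filter_upwards [condExp_indicator_mem_Icc hm μ (hpm i)] with x hx using
        Real.negMulLog_nonneg hx.1 hx.2)
  rw [condEnt, ENNReal.ofReal_sum_of_nonneg fun i _ => hnn i]
  simp_rw [hint, discEntropy]
  rw [← Summable.tsum_finsetSum fun _ _ => ENNReal.summable,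
    ← Summable.tsum_finsetSum fun _ _ => ENNReal.summable, ← ENNReal.tsum_add]
  refine tsum_congr fun a => ?_
  refine chain_cell (fun i => μ.real (part i ∩ X ⁻¹' {a})) (fun i => φ i a) _
    (fun i => measureReal_nonneg) measureReal_le_one ?_ fun i => hval i a
  rw [← hcov, iUnion_inter, measureReal_iUnion_fintype]
  · intro i j hij
    exact (hdisj hij).mono inter_subset_left inter_subset_left
  · exact fun i => (hpm i).inter (hXs a)

theorem condEntropyPart_eq {Ω ι : Type*} {m : MeasurableSpace Ω} [mΩ : MeasurableSpace Ω]
    [Fintype ι] (hm : m ≤ mΩ) (μ : Measure Ω) [IsProbabilityMeasure μ] (part : ι → Set Ω)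
    (hpm : ∀ i, MeasurableSet (part i)) : condEntropyPart μ part m = condEnt μ part m :=
  Finset.sum_congr rfl fun i _ => setIntegral_neg_log_condExp hm μ (hpm i)

theorem condEnt_mem_Icc {Ω ι : Type*} {m : MeasurableSpace Ω} [mΩ : MeasurableSpace Ω] [Fintype ι]
    (hm : m ≤ mΩ) (μ : Measure Ω) [IsProbabilityMeasure μ] (part : ι → Set Ω)
    (hpm : ∀ i, MeasurableSet (part i)) :
    condEnt μ part m ∈ Icc (0 : ℝ) (Fintype.card ι) := by
  have hb := fun i => condExp_indicator_mem_Icc hm μ (hpm i)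
  constructor
  · refine Finset.sum_nonneg fun i _ => integral_nonneg_of_ae ?_
    filter_upwards [hb i] with x hx using Real.negMulLog_nonneg hx.1 hx.2
  · have : ∀ i ∈ Finset.univ, ∫ x, Real.negMulLog
        ((μ[(part i).indicator (fun _ => (1 : ℝ)) | m]) x) ∂μ ≤ 1 := fun i _ => by
      have h1 := integral_mono_of_nonneg (μ := μ) (g := fun _ => (1 : ℝ))
        (f := fun x => Real.negMulLog ((μ[(part i).indicator (fun _ => (1 : ℝ)) | m]) x))
        (by filter_upwards [hb i] with x hx using Real.negMulLog_nonneg hx.1 hx.2)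
        (integrable_const 1)
        (by filter_upwards [hb i] with x hx using
              (Real.negMulLog_le_one_sub_self hx.1).trans (by linarith [hx.1]))
      simpa using h1
    simpa [condEnt] using Finset.sum_le_card_nsmul _ _ 1 this

/-! ### Convergence of conditional entropies along refining lattice partitions -/

/-- Uniform continuity of `x ↦ -x log x` on `[0,1]`, in the affine form that can be integrated. -/
theorem negMulLog_modulus {ε : ℝ} (hε : 0 < ε) : ∃ C : ℝ, 0 < C ∧ ∀ a ∈ Icc (0 : ℝ) 1,
    ∀ b ∈ Icc (0 : ℝ) 1, |Real.negMulLog a - Real.negMulLog b| ≤ ε + C * |a - b| := by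
  have hu := isCompact_Icc.uniformContinuousOn_of_continuous
    (Real.continuous_negMulLog.continuousOn (s := Icc (0 : ℝ) 1))
  obtain ⟨δ, hδ, h⟩ := Metric.uniformContinuousOn_iff.1 hu ε hε
  refine ⟨1 / δ, by positivity, fun a ha b hb => ?_⟩
  rcases lt_or_ge |a - b| δ with hlt | hge
  · have := h a ha b hb hlt
    rw [Real.dist_eq] at this
    have : 0 ≤ 1 / δ * |a - b| := by positivity
    linarith
  · have h1 : (1 : ℝ) ≤ 1 / δ * |a - b| := by
      rw [one_div, inv_mul_eq_div, one_le_div hδ]; exact hge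
    have bd : ∀ c ∈ Icc (0 : ℝ) 1, 0 ≤ Real.negMulLog c ∧ Real.negMulLog c ≤ 1 := fun c hc =>
      ⟨Real.negMulLog_nonneg hc.1 hc.2,
        (Real.negMulLog_le_one_sub_self hc.1).trans (by linarith [hc.1])⟩
    have := bd a ha
    have := bd b hb
    rw [abs_le]; constructor <;> linarith

/-- The conditional expectation is, up to a factor `2`, at least as good an `L¹` approximation of
`u` as any `m`-measurable function. -/
theorem integral_abs_condExp_sub_le {Ω : Type*} {m mΩ : MeasurableSpace Ω} (hm : m ≤ mΩ)
    (μ : Measure Ω) [IsProbabilityMeasure μ] {u s : Ω → ℝ} (hu : Integrable u μ)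
    (hs : StronglyMeasurable[m] s) (hsi : Integrable s μ) :
    ∫ x, |(μ[u | m]) x - u x| ∂μ ≤ 2 * ∫ x, |u x - s x| ∂μ := by
  have h1 : μ[u - s | m] =ᵐ[μ] μ[u | m] - s := by
    have := condExp_sub hu hsi m
    rwa [condExp_of_stronglyMeasurable hm hs hsi] at this
  have h2 := integral_abs_condExp_le (μ := μ) (m := m) (u - s)
  have h3 : ∫ x, |(μ[u | m]) x - u x| ∂μ
      ≤ ∫ x, (|(μ[u - s | m]) x| + |u x - s x|) ∂μ := by
    refine integral_mono_ae (integrable_condExp.sub hu).abs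
      (integrable_condExp.abs.add (hu.sub hsi).abs) ?_
    filter_upwards [h1] with x hx
    rw [hx, Pi.sub_apply, abs_sub_comm (u x) (s x)]
    exact abs_sub_le _ _ _
  have h4 := integral_add (μ := μ) (f := fun x => |(μ[u - s | m]) x|)
    (g := fun x => |u x - s x|) integrable_condExp.abs (hu.sub hsi).abs
  rw [h4] at h3
  simp only [Pi.sub_apply] at h2
  linarith

/-- The coordinatewise floor, so that `fl v = α` exactly when `v` lies in the cube `[0,1)^d + α`. -/
def fl {d : ℕ} (v : EuclideanSpace ℝ (Fin d)) : Fin d → ℤ := fun i => ⌊v i⌋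

theorem measurable_fl (d : ℕ) : Measurable (fl (d := d)) := by
  refine measurable_pi_lambda _ fun i => ?_
  exact Int.measurable_floor.comp (EuclideanSpace.proj (𝕜 := ℝ) i).continuous.measurable

theorem norm_sub_fl_le {d : ℕ} (v : EuclideanSpace ℝ (Fin d)) :
    ‖v - WithLp.toLp 2 (fun i => (fl v i : ℝ))‖ ≤ √d := by
  rw [EuclideanSpace.norm_eq]
  refine Real.sqrt_le_sqrt ?_
  calc ∑ i, ‖(v - WithLp.toLp 2 (fun i => (fl v i : ℝ))) i‖ ^ 2 ≤ ∑ i : Fin d, (1 : ℝ) := by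
        refine Finset.sum_le_sum fun i _ => ?_
        have h : (v - WithLp.toLp 2 (fun i => (fl v i : ℝ))) i = Int.fract (v i) := rfl
        rw [h, Real.norm_of_nonneg (Int.fract_nonneg _)]
        exact pow_le_one₀ (Int.fract_nonneg _) (Int.fract_lt_one _).le
    _ = d := by simp

theorem pow_apply_pow_apply {E : Type*} [NormedAddCommGroup E] [NormedSpace ℝ E]
    (A B : E →L[ℝ] E) (hAB : ∀ v, A (B v) = v) (n : ℕ) (v : E) : (A ^ n) ((B ^ n) v) = v := by
  induction n generalizing v with
  | zero => rfl
  | succ n ih =>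
    rw [pow_succ A, pow_succ' B, mul_apply_eq_comp, mul_apply_eq_comp,
      hAB, ih]

theorem norm_pow_apply_le {E : Type*} [NormedAddCommGroup E] [NormedSpace ℝ E]
    (A : E →L[ℝ] E) (n : ℕ) (v : E) : ‖(A ^ n) v‖ ≤ ‖A‖ ^ n * ‖v‖ := by
  induction n generalizing v with
  | zero => simp
  | succ n ih =>
    rw [pow_succ, mul_apply_eq_comp, pow_succ, mul_assoc]
    exact (ih _).trans (by gcongr; exact A.le_opNorm v)

/-- The conditional entropy given the cell of `Bⁿ θ + t` in the cube lattice converges to the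
conditional entropy given `θ`, uniformly in the translation `t`. The uniformity comes from
approximating `E(1_s | θ)` in `L¹` by a uniformly continuous function of `θ`: such a function is
nearly constant on every set of diameter at most `‖A‖ⁿ √d`, wherever the set is located. -/
theorem condEnt_converge {d : ℕ} {Ω : Type*} [mΩ : MeasurableSpace Ω] (μ : Measure Ω)
    [IsProbabilityMeasure μ] {s : Set Ω} (hs : MeasurableSet s)
    (A B : EuclideanSpace ℝ (Fin d) →L[ℝ] EuclideanSpace ℝ (Fin d))
    (hAB : ∀ v, A (B v) = v) (hA : ‖A‖ < 1)
    (θ : Ω → EuclideanSpace ℝ (Fin d)) (hθ : Measurable θ) {ε : ℝ} (hε : 0 < ε) :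
    ∀ᶠ n : ℕ in atTop, ∀ t : EuclideanSpace ℝ (Fin d),
      |∫ x, Real.negMulLog ((μ[s.indicator (fun _ => (1 : ℝ)) |
          MeasurableSpace.comap (fun x => fl ((B ^ n) (θ x) + t)) inferInstance]) x) ∂μ
        - ∫ x, Real.negMulLog ((μ[s.indicator (fun _ => (1 : ℝ)) |
          MeasurableSpace.comap θ inferInstance]) x) ∂μ| ≤ ε := by
  obtain ⟨C, hC, hmod⟩ := negMulLog_modulus (half_pos hε)
  set u₀ : Ω → ℝ := s.indicator (fun _ => (1 : ℝ)) with hu₀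
  have hui₀ : Integrable u₀ μ := (integrable_const 1).indicator hs
  set ν := μ.map θ with hν
  have : IsProbabilityMeasure ν := Measure.isProbabilityMeasure_map hθ.aemeasurable
  set mθ : MeasurableSpace Ω := MeasurableSpace.comap θ inferInstance with hmθ
  have hmθle : mθ ≤ mΩ := hθ.comap_le
  set u := μ[u₀ | mθ] with hu
  obtain ⟨g, hgm, hg⟩ := (stronglyMeasurable_condExp (μ := μ) (m := mθ)
      (f := u₀)).measurable.exists_eq_measurable_comp
  have hg' : u = g ∘ θ := hg
  have hgi : Integrable g ν := by
    rw [hν, integrable_map_measure hgm.aestronglyMeasurable hθ.aemeasurable, ← hg']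
    exact integrable_condExp
  set η := ε / (2 * C) / 4 with hη
  have hηpos : 0 < η := by positivity
  obtain ⟨h, hcs, happ, hhc, hhi⟩ := hgi.exists_hasCompactSupport_integral_sub_le hηpos
  have hunif := hhc.uniformContinuous_of_tendsto_cocompact hcs.is_zero_at_infty
  obtain ⟨δ, hδ, hδ'⟩ := Metric.uniformContinuous_iff.1 hunif η hηpos
  have hlim : Tendsto (fun n : ℕ => ‖A‖ ^ n * √d) atTop (nhds 0) := by
    simpa using (tendsto_pow_atTop_nhds_zero_of_lt_one (norm_nonneg A) hA).mul_const (√d)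
  have hABn := pow_apply_pow_apply A B hAB
  filter_upwards [hlim.eventually_lt_const hδ] with n hn t
  set X : Ω → Fin d → ℤ := fun x => fl ((B ^ n) (θ x) + t) with hX
  have hXθ : Measurable[mθ] X := by
    have h1 : Measurable fun e : EuclideanSpace ℝ (Fin d) => fl ((B ^ n) e + t) :=
      (measurable_fl d).comp ((B ^ n).continuous.measurable.add_const t)
    exact h1.comp (comap_measurable θ)
  have hle : MeasurableSpace.comap X inferInstance ≤ mθ := hXθ.comap_le
  have hle' := hle.trans hmθle
  -- `h` evaluated at the corner of the cell containing `θ x`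
  let S : Ω → ℝ := fun x =>
    h ((A ^ n) (WithLp.toLp 2 (fun i => (X x i : ℝ)) - t))
  have hSX : StronglyMeasurable[MeasurableSpace.comap X inferInstance] S := by
    have h1 : Measurable fun a : Fin d → ℤ =>
        h ((A ^ n) (WithLp.toLp 2 (fun i => (a i : ℝ)) - t)) := measurable_of_countable _
    exact (h1.comp (comap_measurable X)).stronglyMeasurable
  have hclose : ∀ x, |h (θ x) - S x| ≤ η := by
    intro x
    refine (hδ' ?_).le
    refine lt_of_le_of_lt ?_ hn
    have h2 : θ x - (A ^ n) (WithLp.toLp 2 (fun i => (X x i : ℝ)) - t)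
        = (A ^ n) (((B ^ n) (θ x) + t) - WithLp.toLp 2 (fun i => (X x i : ℝ))) := by
      simp only [map_sub, map_add, hABn]; abel
    rw [dist_eq_norm, h2]
    refine (norm_pow_apply_le A n _).trans ?_
    gcongr
    exact norm_sub_fl_le _
  have hhθ : Integrable (fun x => h (θ x)) μ :=
    (integrable_map_measure hhc.aestronglyMeasurable hθ.aemeasurable).1 hhi
  have hSi : Integrable S μ := by
    have h1 : Integrable (fun x => h (θ x) - S x) μ :=
      Integrable.of_bound (hhθ.aestronglyMeasurable.sub (hSX.mono hle').aestronglyMeasurable) η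
        (Eventually.of_forall hclose)
    refine (hhθ.sub h1).congr (Eventually.of_forall fun x => ?_)
    simp
  have hui : Integrable u μ := integrable_condExp
  have huS : ∫ x, |u x - S x| ∂μ ≤ 2 * η := by
    have h1 : ∫ x, |u x - h (θ x)| ∂μ ≤ η := by
      have hmeas : Measurable fun x => ‖g x - h x‖ := (hgm.sub hhc.measurable).norm
      rw [hν, integral_map hθ.aemeasurable hmeas.aestronglyMeasurable] at happ
      rw [hg']; exact happ
    calc ∫ x, |u x - S x| ∂μ ≤ ∫ x, (|u x - h (θ x)| + η) ∂μ := by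
          refine integral_mono (hui.sub hSi).abs ((hui.sub hhθ).abs.add (integrable_const η))
            fun x => ?_
          have := abs_sub_le (u x) (h (θ x)) (S x)
          have := hclose x
          change |u x - S x| ≤ |u x - h (θ x)| + η
          linarith
      _ = ∫ x, |u x - h (θ x)| ∂μ + η := by
          have e := integral_add (μ := μ) (f := fun x => |u x - h (θ x)|) (g := fun _ => η)
            (hui.sub hhθ).abs (integrable_const η)
          rw [e]; simp
      _ ≤ _ := by linarith
  -- `S` is measurable for the coarser σ-algebra, so the `L¹` distance from `u` to `E(u | X)` is at
  -- most twice its distance to `S`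
  have hL1 := integral_abs_condExp_sub_le hle' μ hui hSX hSi
  have htower := condExp_condExp_of_le (μ := μ) (f := u₀) hle hmθle
  set w := μ[u₀ | MeasurableSpace.comap X inferInstance] with hw
  have hwu : ∫ x, |w x - u x| ∂μ ≤ ε / (2 * C) := by
    have : ∫ x, |w x - u x| ∂μ
        = ∫ x, |(μ[u | MeasurableSpace.comap X inferInstance]) x - u x| ∂μ := by
      refine integral_congr_ae ?_
      filter_upwards [htower] with x hx
      rw [hu, hx]
    rw [this]; linarith
  have hwi : Integrable w μ := integrable_condExp
  have bw := condExp_indicator_mem_Icc hle' μ hs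
  have bu := condExp_indicator_mem_Icc hmθle μ hs
  have hηi : ∀ v : Ω → ℝ, Integrable v μ → (∀ᵐ x ∂μ, v x ∈ Icc (0 : ℝ) 1) →
      Integrable (fun x => Real.negMulLog (v x)) μ := fun v hv hb => by
    refine Integrable.of_bound
      (Real.continuous_negMulLog.comp_aestronglyMeasurable hv.aestronglyMeasurable) 1 ?_
    filter_upwards [hb] with x hx
    rw [Real.norm_of_nonneg (Real.negMulLog_nonneg hx.1 hx.2)]
    exact (Real.negMulLog_le_one_sub_self hx.1).trans (by linarith [hx.1])
  have hwη := hηi w hwi bw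
  have huη := hηi u hui bu
  rw [← integral_sub hwη huη]
  calc |∫ x, (Real.negMulLog (w x) - Real.negMulLog (u x)) ∂μ|
      ≤ ∫ x, |Real.negMulLog (w x) - Real.negMulLog (u x)| ∂μ := abs_integral_le_integral_abs
    _ ≤ ∫ x, (ε / 2 + C * |w x - u x|) ∂μ := by
        refine integral_mono_ae (hwη.sub huη).abs
          ((integrable_const _).add ((hwi.sub hui).abs.const_mul C)) ?_
        filter_upwards [bw, bu] with x h1 h2 using hmod _ h1 _ h2
    _ = ε / 2 + C * ∫ x, |w x - u x| ∂μ := by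
        have e := integral_add (μ := μ) (f := fun _ => ε / 2) (g := fun x => C * |w x - u x|)
          (integrable_const (ε / 2)) ((hwi.sub hui).abs.const_mul C)
        rw [e, integral_const_mul]; simp
    _ ≤ ε / 2 + C * (ε / (2 * C)) := by gcongr
    _ = ε := by field_simp; norm_num

/-! ### Averaging over translations of the lattice -/

open scoped Pointwise in
/-- Lebesgue measure on `[0,1)^d`: a probability measure whose integrals of `ℤ^d`-periodic
functions are translation invariant. -/
theorem exists_torus_measure (d : ℕ) : ∃ τ : Measure (EuclideanSpace ℝ (Fin d)),
    IsProbabilityMeasure τ ∧ (∀ᵐ t ∂τ, ∀ i, t i ∈ Ico (0 : ℝ) 1) ∧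
    ∀ F : EuclideanSpace ℝ (Fin d) → ENNReal,
      (∀ (k : Fin d → ℤ) (t w : EuclideanSpace ℝ (Fin d)), (∀ i, w i = t i + k i) → F w = F t) →
      ∀ s, ∫⁻ t, F (t + s) ∂τ = ∫⁻ t, F t ∂τ := by
  let ob := EuclideanSpace.basisFun (Fin d) ℝ
  let b := ob.toBasis
  let D := ZSpan.fundamentalDomain b
  have hrepr : ∀ (t : EuclideanSpace ℝ (Fin d)) i, b.repr t i = t i := fun t i => by
    simp [b, ob]
  have hDm : MeasurableSet D := ZSpan.fundamentalDomain_measurableSet b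
  refine ⟨volume.restrict D, ⟨?_⟩, ?_, ?_⟩
  · rw [Measure.restrict_apply_univ,
      measure_congr (ZSpan.fundamentalDomain_ae_parallelepiped b volume)]
    simpa [b] using ob.volume_parallelepiped
  · filter_upwards [ae_restrict_mem hDm] with t ht i
    have := (ZSpan.mem_fundamentalDomain b).1 ht i
    rwa [hrepr] at this
  · intro F hF s
    have : VAddInvariantMeasure (Submodule.span ℤ (range b)) (EuclideanSpace ℝ (Fin d)) volume :=
      ⟨fun g s _ => measure_preimage_add volume (g : EuclideanSpace ℝ (Fin d)) s⟩
    have hfd := ZSpan.isAddFundamentalDomain b (volume : Measure (EuclideanSpace ℝ (Fin d)))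
    have hfd2 := hfd.vadd_of_comm s
    have h := hfd.setLIntegral_eq hfd2 (f := F) (fun g x => ?_)
    · calc ∫⁻ t in D, F (t + s) = ∫⁻ t in D, F (s +ᵥ t) := by simp [add_comm]
        _ = ∫⁻ t in s +ᵥ D, F t := ?_
        _ = _ := h.symm
      exact (measurePreserving_vadd s volume).setLIntegral_comp_emb
        (measurableEmbedding_const_vadd _) _ _
    · obtain ⟨g, hg⟩ := g
      have hg' := (b.mem_span_iff_repr_mem ℤ g).1 hg
      choose k hk using hg'
      refine hF k _ _ fun i => ?_
      have := hk i
      rw [hrepr] at this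
      change g i + x i = _
      rw [← this]; simp [add_comm]

theorem measurable_shift {l : ℕ} : Measurable (shift (l := l)) :=
  measurable_pi_lambda _ fun n => measurable_pi_apply (n + 1)

theorem fl_add_int {d : ℕ} (v t w : EuclideanSpace ℝ (Fin d)) (k : Fin d → ℤ)
    (h : ∀ i, w i = t i + k i) : fl (v + w) = fl (v + t) + k := by
  funext i
  simp only [fl, PiLp.add_apply, h, Pi.add_apply, ← add_assoc, Int.floor_add_intCast]

theorem measurable_discEntropy {d : ℕ} {Ω : Type*} [MeasurableSpace Ω] (μ : Measure Ω)
    [IsProbabilityMeasure μ] {s : Set Ω} (hs : MeasurableSet s)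
    {v : Ω → EuclideanSpace ℝ (Fin d)} (hv : Measurable v) :
    Measurable fun t => discEntropy μ s fun x => fl (v x + t) := by
  refine Measurable.tsum fun a => ?_
  refine (Real.continuous_negMulLog.measurable.comp ?_).ennreal_ofReal
  refine Measurable.ennreal_toReal ?_
  have hset : MeasurableSet {p : EuclideanSpace ℝ (Fin d) × Ω | p.2 ∈ s ∧ fl (v p.2 + p.1) = a} :=
    (measurable_snd hs).inter
      (((measurable_fl d).comp ((hv.comp measurable_snd).add measurable_fst))
        (measurableSet_singleton a))
  exact measurable_measure_prodMk_left hset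

theorem discEntropy_periodic {d : ℕ} {Ω : Type*} [MeasurableSpace Ω] (μ : Measure Ω) (s : Set Ω)
    (v : Ω → EuclideanSpace ℝ (Fin d)) (k : Fin d → ℤ) (t w : EuclideanSpace ℝ (Fin d))
    (h : ∀ i, w i = t i + k i) :
    discEntropy μ s (fun x => fl (v x + w)) = discEntropy μ s fun x => fl (v x + t) := by
  rw [discEntropy, ← (Equiv.addRight k).tsum_eq, discEntropy]
  refine tsum_congr fun a => ?_
  congr 4
  ext x
  simp [fl_add_int _ t w k h]

/-- A pointwise uniform estimate passes to the average over a probability measure. -/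
theorem abs_toReal_lintegral_sub_le {Ω : Type*} [MeasurableSpace Ω] (τ : Measure Ω)
    [IsProbabilityMeasure τ] (c : Ω → ℝ) {h ε : ℝ} (hh : 0 ≤ h) (hc : ∀ t, |c t - h| ≤ ε) :
    |(∫⁻ t, ENNReal.ofReal (c t) ∂τ).toReal - h| ≤ ε := by
  have hε : 0 ≤ ε := by
    obtain ⟨t⟩ := nonempty_of_isProbabilityMeasure τ
    exact (abs_nonneg _).trans (hc t)
  have h1 : ∫⁻ t, ENNReal.ofReal (c t) ∂τ ≤ ENNReal.ofReal (h + ε) := by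
    calc _ ≤ ∫⁻ _, ENNReal.ofReal (h + ε) ∂τ := lintegral_mono fun t =>
          ENNReal.ofReal_le_ofReal (by linarith [(abs_le.1 (hc t)).2])
      _ = _ := by simp
  have h2 : ENNReal.ofReal (h - ε) ≤ ∫⁻ t, ENNReal.ofReal (c t) ∂τ := by
    calc _ = ∫⁻ _, ENNReal.ofReal (h - ε) ∂τ := by simp
      _ ≤ _ := lintegral_mono fun t =>
          ENNReal.ofReal_le_ofReal (by linarith [(abs_le.1 (hc t)).1])
  have h3 := ENNReal.toReal_le_of_le_ofReal (by linarith) h1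
  have h4 := (ENNReal.ofReal_le_iff_le_toReal
    (ne_top_of_le_ne_top ENNReal.ofReal_ne_top h1)).1 h2
  rw [abs_le]; constructor <;> linarith

theorem cylP_measurable {l : ℕ} (i : Fin l) : MeasurableSet (cylP i) :=
  (show Measurable fun x : Sig l => x 0 from measurable_pi_apply 0) (measurableSet_singleton i)

theorem cylP_disjoint {l : ℕ} : Pairwise fun i j : Fin l => Disjoint (cylP i) (cylP j) :=
  fun i j hij => Set.disjoint_left.2 fun x (hx : x 0 = i) (hx' : x 0 = j) => hij (hx.symm.trans hx')

theorem cylP_cover {l : ℕ} : ⋃ i : Fin l, cylP i = univ := by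
  ext x; simp [cylP]

/-- The exact recursion for the averaged entropies. After splitting along the cylinders `x₀ = i`,
passing from `X_{n+1,t}` to `X_{n,t} ∘ σ` translates `t` by the fixed vector `B^{n+1} c_i`, which
the average over the torus does not see. -/
theorem entropy_step {d l : ℕ} (μ : Measure (Sig l)) [IsProbabilityMeasure μ]
    (hμ : Measure.map shift μ = μ) (τ : Measure (EuclideanSpace ℝ (Fin d)))
    (hτ : ∀ F : EuclideanSpace ℝ (Fin d) → ENNReal,
      (∀ (k : Fin d → ℤ) (t w : EuclideanSpace ℝ (Fin d)), (∀ i, w i = t i + k i) → F w = F t) →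
      ∀ s, ∫⁻ t, F (t + s) ∂τ = ∫⁻ t, F t ∂τ)
    (A B : EuclideanSpace ℝ (Fin d) →L[ℝ] EuclideanSpace ℝ (Fin d)) (hBA : ∀ v, B (A v) = v)
    (c : Fin l → EuclideanSpace ℝ (Fin d)) (π : Sig l → EuclideanSpace ℝ (Fin d))
    (hπm : Measurable π) (hπ : ∀ x, π x = A (π (shift x)) + c (x 0)) (n : ℕ) :
    ∫⁻ t, discEntropy μ univ (fun x => fl ((B ^ (n + 1)) (π x) + t)) ∂τ
      + ∫⁻ t, ENNReal.ofReal (condEnt μ cylP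
          (MeasurableSpace.comap (fun x => fl ((B ^ (n + 1)) (π x) + t)) inferInstance)) ∂τ
    = ∫⁻ t, discEntropy μ univ (fun x => fl ((B ^ n) (π x) + t)) ∂τ
      + ∫⁻ t, ENNReal.ofReal (condEnt μ cylP
          (MeasurableSpace.comap (fun x => fl ((B ^ n) (π (shift x)) + t)) inferInstance)) ∂τ := by
  have hv : ∀ (k : ℕ) {θ : Sig l → EuclideanSpace ℝ (Fin d)}, Measurable θ →
      Measurable fun x => (B ^ k) (θ x) := fun k θ hθ => (B ^ k).continuous.measurable.comp hθ
  have hX : ∀ {v : Sig l → EuclideanSpace ℝ (Fin d)}, Measurable v → ∀ t,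
      Measurable fun x => fl (v x + t) := fun hv t => (measurable_fl d).comp (hv.add_const t)
  have hπs : Measurable fun x => π (shift x) := hπm.comp measurable_shift
  have hinv : ∀ t, discEntropy μ univ (fun x => fl ((B ^ n) (π x) + t))
      = discEntropy μ univ (fun x => fl ((B ^ n) (π (shift x)) + t)) := by
    intro t
    refine tsum_congr fun a => ?_
    congr 2
    simp only [univ_inter]
    conv_lhs => rw [← hμ]
    rw [measureReal_def, measureReal_def, Measure.map_apply measurable_shift
      ((hX (hv n hπm) t) (measurableSet_singleton a))]
    rfl
  have hshift : ∀ i t, discEntropy μ (cylP i) (fun x => fl ((B ^ (n + 1)) (π x) + t))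
      = discEntropy μ (cylP i)
        (fun x => fl ((B ^ n) (π (shift x)) + (t + (B ^ (n + 1)) (c i)))) := by
    intro i t
    refine tsum_congr fun a => ?_
    congr 3
    ext x
    refine and_congr_right fun (hx : x 0 = i) => ?_
    have : (B ^ (n + 1)) (π x) + t = (B ^ n) (π (shift x)) + (t + (B ^ (n + 1)) (c i)) := by
      rw [hπ x, hx, map_add]
      conv_lhs => rw [pow_succ, mul_apply_eq_comp, hBA]
      rw [pow_succ, mul_apply_eq_comp]
      abel
    simp only [mem_preimage, this]
  simp_rw [hinv]
  rw [← lintegral_add_left (measurable_discEntropy μ MeasurableSet.univ (hv _ hπm)),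
    ← lintegral_add_left (measurable_discEntropy μ MeasurableSet.univ (hv _ hπs))]
  simp_rw [← chain_rule μ cylP cylP_measurable cylP_disjoint cylP_cover _ (hX (hv _ hπm) _),
    ← chain_rule μ cylP cylP_measurable cylP_disjoint cylP_cover _ (hX (hv _ hπs) _)]
  rw [lintegral_finsetSum _ fun i _ => measurable_discEntropy μ (cylP_measurable i) (hv _ hπm),
    lintegral_finsetSum _ fun i _ => measurable_discEntropy μ (cylP_measurable i) (hv _ hπs)]
  refine Finset.sum_congr rfl fun i _ => ?_
  simp_rw [hshift]
  exact hτ (fun t => discEntropy μ (cylP i) (fun x => fl ((B ^ n) (π (shift x)) + t)))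
    (fun k t w h => discEntropy_periodic μ _ _ k t w h) _


/-! ### The Gibbs inequality and the partition function -/

/-- The Gibbs inequality `H_μ(X) + ∫ φ dμ ≤ log ∑ₐ W a` for a variable with finitely many values,
where `W a` dominates `exp φ` on `{X = a}`. The second conclusion makes the bound usable as a real
inequality. -/
theorem gibbs {Ω κ : Type*} [MeasurableSpace Ω] [MeasurableSpace κ]
    [MeasurableSingletonClass κ] (μ : Measure Ω) [IsProbabilityMeasure μ] (X : Ω → κ)
    (hX : Measurable X) (φ : Ω → ℝ) (hφ : Integrable φ μ) (F : Finset κ) (hF : ∀ x, X x ∈ F)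
    (W : κ → ℝ) (hW0 : ∀ a, 0 ≤ W a) (hW : ∀ x, Real.exp (φ x) ≤ W (X x)) (Z : ℝ)
    (hZ : ∑ a ∈ F, W a ≤ Z) :
    discEntropy μ univ X ≤ ENNReal.ofReal (Real.log Z - ∫ x, φ x ∂μ) ∧
      0 ≤ Real.log Z - ∫ x, φ x ∂μ := by
  obtain ⟨x₀⟩ := nonempty_of_isProbabilityMeasure μ
  have hZpos : 0 < Z := (Real.exp_pos (φ x₀)).trans_le
    ((hW x₀).trans ((Finset.single_le_sum (fun a _ => hW0 a) (hF x₀)).trans hZ))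
  set q : κ → ℝ := fun a => μ.real (univ ∩ X ⁻¹' {a}) with hq
  have hq0 : ∀ a, 0 ≤ q a := fun a => measureReal_nonneg
  have hη0 : ∀ a, 0 ≤ Real.negMulLog (q a) := fun a =>
    Real.negMulLog_nonneg (hq0 a) measureReal_le_one
  have hms : ∀ a, MeasurableSet (X ⁻¹' {a}) := fun a => hX (measurableSet_singleton a)
  have hdisj : Set.PairwiseDisjoint (F : Set κ) fun a => X ⁻¹' {a} := fun a _ b _ hab =>
    (disjoint_singleton.2 hab).preimage X
  have hcov : ⋃ a ∈ F, X ⁻¹' {a} = univ := by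
    ext x; simpa using hF x
  have hqsum : ∑ a ∈ F, q a = 1 := by
    simp only [hq, univ_inter]
    rw [← measureReal_biUnion_finset hdisj fun a _ => hms a, hcov, probReal_univ]
  have hφsum : ∫ x, φ x ∂μ ≤ ∑ a ∈ F, q a * Real.log (W a) := by
    rw [← setIntegral_univ, ← hcov, integral_biUnion_finset F (fun a _ => hms a) hdisj
      fun a _ => hφ.integrableOn]
    refine Finset.sum_le_sum fun a _ => ?_
    calc ∫ x in X ⁻¹' {a}, φ x ∂μ ≤ ∫ x in X ⁻¹' {a}, Real.log (W a) ∂μ := by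
          refine setIntegral_mono_on hφ.integrableOn (integrableOn_const (by simp)) (hms a)
            fun x hx => ?_
          have hx' : X x = a := hx
          have := hW x
          rw [hx'] at this
          exact (Real.le_log_iff_exp_le ((Real.exp_pos _).trans_le this)).2 this
      _ = _ := by rw [setIntegral_const, smul_eq_mul]; simp [hq]
  -- the inequality `log u ≤ u - 1` at `u = W a / (Z * q a)`, multiplied by `q a`
  have hterm : ∀ a ∈ F, Real.negMulLog (q a) + q a * Real.log (W a)
      ≤ q a * Real.log Z + W a / Z - q a := by
    intro a _
    rcases (hq0 a).eq_or_lt with h0 | hpos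
    · rw [← h0]; simp; exact div_nonneg (hW0 a) hZpos.le
    · have hWpos : 0 < W a := by
        have hne : (univ ∩ X ⁻¹' {a}).Nonempty := by
          rw [nonempty_iff_ne_empty]; intro he
          have h0 : q a = 0 := by simp only [hq]; rw [he]; simp
          exact hpos.ne' h0
        obtain ⟨x, -, hx⟩ := hne
        have hx' : X x = a := hx
        exact (Real.exp_pos _).trans_le (hx' ▸ hW x)
      have h1 := Real.log_le_sub_one_of_pos (show 0 < W a / (Z * q a) by positivity)
      rw [Real.log_div hWpos.ne' (by positivity), Real.log_mul hZpos.ne' hpos.ne'] at h1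
      have h2 := mul_le_mul_of_nonneg_left h1 hpos.le
      have h3 : q a * (W a / (Z * q a) - 1) = W a / Z - q a := by field_simp
      rw [h3] at h2
      rw [Real.negMulLog]; linarith
  have hmain : ∑ a ∈ F, Real.negMulLog (q a) ≤ Real.log Z - ∫ x, φ x ∂μ := by
    have h1 := Finset.sum_le_sum hterm
    rw [Finset.sum_add_distrib, Finset.sum_sub_distrib, Finset.sum_add_distrib,
      ← Finset.sum_mul, hqsum, ← Finset.sum_div] at h1
    have h2 : (∑ a ∈ F, W a) / Z ≤ 1 := (div_le_one hZpos).2 hZ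
    linarith
  refine ⟨?_, (Finset.sum_nonneg fun a _ => hη0 a).trans hmain⟩
  rw [discEntropy, tsum_eq_sum (s := F), ← ENNReal.ofReal_sum_of_nonneg fun a _ => hη0 a]
  · exact ENNReal.ofReal_le_ofReal hmain
  · intro a ha
    have : univ ∩ X ⁻¹' {a} = ∅ := by
      ext x; simp only [univ_inter, mem_preimage, mem_singleton_iff, mem_empty_iff_false, iff_false]
      rintro rfl; exact ha (hF x)
    simp [this]

/-- Translating by `t ∈ [0,1)^d` changes the index of the cube by a vector of zeros and ones. -/
theorem fl_add_mem {d : ℕ} (v t : EuclideanSpace ℝ (Fin d)) (ht : ∀ i, t i ∈ Ico (0 : ℝ) 1) :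
    ∃ δ : Fin d → Fin 2, fl (v + t) = fl v + fun i => ((δ i : ℕ) : ℤ) := by
  have h : ∀ i, ∃ e : Fin 2, fl (v + t) i = fl v i + ((e : ℕ) : ℤ) := by
    intro i
    have h1 : fl (v + t) i = ⌊v i + t i⌋ := rfl
    have h2 : fl v i = ⌊v i⌋ := rfl
    have h3 := ht i
    have hlo : ⌊v i⌋ ≤ ⌊v i + t i⌋ := Int.floor_mono (by linarith [h3.1])
    have hhi : ⌊v i + t i⌋ < ⌊v i⌋ + 2 := by
      rw [Int.floor_lt]; push_cast; linarith [h3.2, Int.lt_floor_add_one (v i)]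
    rcases (show ⌊v i + t i⌋ = ⌊v i⌋ ∨ ⌊v i + t i⌋ = ⌊v i⌋ + 1 by omega) with h | h
    · exact ⟨0, by rw [h1, h2, h]; simp⟩
    · exact ⟨1, by rw [h1, h2, h]; simp⟩
  choose δ hδ using h
  exact ⟨δ, funext hδ⟩

theorem fl_mem_Icc {d : ℕ} (v : EuclideanSpace ℝ (Fin d)) (m : ℕ) (hv : ‖v‖ ≤ m) :
    fl v ∈ Finset.Icc (fun _ => -(m : ℤ)) (fun _ : Fin d => (m : ℤ)) := by
  have h : ∀ i, |v i| ≤ m := fun i => (PiLp.norm_apply_le v i).trans hv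
  rw [Finset.mem_Icc]
  constructor
  · intro i
    refine Int.le_floor.2 ?_
    push_cast; exact (abs_le.1 (h i)).1
  · intro i
    have : ⌊v i⌋ ≤ ⌊((m : ℤ) : ℝ)⌋ := Int.floor_mono (by push_cast; exact (abs_le.1 (h i)).2)
    rwa [Int.floor_intCast] at this

/-- The weight `sup {exp (φ x) : X x = a}` of the cell `{X = a}`; it is `0` on empty cells. -/
def wt {Ω κ : Type*} (X : Ω → κ) (φ : Ω → ℝ) (a : κ) : ℝ :=
  ⨆ x, ⨆ (_ : X x = a), Real.exp (φ x)

theorem wt_nonneg {Ω κ : Type*} (X : Ω → κ) (φ : Ω → ℝ) (a : κ) : 0 ≤ wt X φ a :=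
  Real.iSup_nonneg fun _ => Real.iSup_nonneg fun _ => (Real.exp_pos _).le

theorem wt_le {Ω κ : Type*} (X : Ω → κ) (φ : Ω → ℝ) {C : ℝ} (hC : ∀ x, φ x ≤ C) (a : κ) :
    wt X φ a ≤ Real.exp C :=
  Real.iSup_le (fun x => Real.iSup_le (fun _ => Real.exp_le_exp.2 (hC x)) (Real.exp_pos _).le)
    (Real.exp_pos _).le

theorem le_wt {Ω κ : Type*} (X : Ω → κ) (φ : Ω → ℝ) {C : ℝ} (hC : ∀ x, φ x ≤ C) (x : Ω) :
    Real.exp (φ x) ≤ wt X φ (X x) := by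
  refine le_ciSup_of_le ⟨Real.exp C, ?_⟩ x ?_
  · rintro _ ⟨y, rfl⟩
    exact Real.iSup_le (fun _ => Real.exp_le_exp.2 (hC y)) (Real.exp_pos _).le
  · rw [ciSup_pos rfl]

theorem wt_eq_zero {Ω κ : Type*} (X : Ω → κ) (φ : Ω → ℝ) {F : Finset κ} (hF : ∀ x, X x ∈ F) {a : κ}
    (ha : a ∉ F) : wt X φ a = 0 := by
  have : ∀ x, ¬ X x = a := fun x h => ha (h ▸ hF x)
  simp [wt, this]

/-- Entropy of the translated lattice partition, bounded through the partition function of the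
untranslated one: a translated cube meets at most `2^d` cubes of the lattice, whose weights are
added up. -/
theorem discEntropy_le {d : ℕ} {Ω : Type*} [MeasurableSpace Ω] (μ : Measure Ω)
    [IsProbabilityMeasure μ] {v : Ω → EuclideanSpace ℝ (Fin d)} (hv : Measurable v)
    {φ : Ω → ℝ} (hφ : Integrable φ μ) {C : ℝ} (hC : ∀ x, φ x ≤ C) {F : Finset (Fin d → ℤ)}
    (hF : ∀ x, fl (v x) ∈ F) {t : EuclideanSpace ℝ (Fin d)} (ht : ∀ i, t i ∈ Ico (0 : ℝ) 1) :
    discEntropy μ univ (fun x => fl (v x + t))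
      ≤ ENNReal.ofReal (Real.log (2 ^ d * ∑' a, wt (fun x => fl (v x)) φ a) - ∫ x, φ x ∂μ) ∧
    0 ≤ Real.log (2 ^ d * ∑' a, wt (fun x => fl (v x)) φ a) - ∫ x, φ x ∂μ := by
  classical
  set w := wt (fun x => fl (v x)) φ with hw
  have hsum : Summable w := summable_of_ne_finset_zero (s := F) fun a ha => wt_eq_zero _ _ hF ha
  let e : (Fin d → Fin 2) → Fin d → ℤ := fun δ i => ((δ i : ℕ) : ℤ)
  refine gibbs μ _ ((measurable_fl d).comp (hv.add_const t)) φ hφ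
    (Finset.univ.biUnion fun δ => F.image (· + e δ)) (fun x => ?_)
    (fun a => ∑ δ, w (a - e δ)) (fun a => Finset.sum_nonneg fun δ _ => wt_nonneg _ _ _)
    (fun x => ?_) _ ?_
  · obtain ⟨δ, hδ⟩ := fl_add_mem (v x) t ht
    exact Finset.mem_biUnion.2 ⟨δ, Finset.mem_univ _, Finset.mem_image.2 ⟨_, hF x, hδ.symm⟩⟩
  · obtain ⟨δ, hδ⟩ := fl_add_mem (v x) t ht
    refine le_trans ?_ (Finset.single_le_sum (f := fun δ => w (fl (v x + t) - e δ))
      (fun δ _ => wt_nonneg _ _ _) (Finset.mem_univ δ))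
    have : fl (v x + t) - e δ = fl (v x) := by rw [hδ]; exact add_sub_cancel_right _ _
    simp only [this]
    exact le_wt (fun x => fl (v x)) φ hC x
  · rw [Finset.sum_comm]
    have hcard : ((Finset.univ : Finset (Fin d → Fin 2)).card : ℝ) = 2 ^ d := by simp
    rw [← hcard, ← nsmul_eq_mul]
    refine Finset.sum_le_card_nsmul _ _ _ fun δ _ => ?_
    rw [← Finset.sum_image (g := fun a => a - e δ) (f := w)
      (fun a _ b _ h => sub_left_injective h)]
    exact hsum.sum_le_tsum _ fun a _ => wt_nonneg _ _ _

/-! ### The coding map and the partition function -/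

/-- The coding map takes values in `K`, satisfies `π(x) = A π(σx) + c_{x₀}`, and is measurable,
being the limit of the partial sums of `∑ Aᵏ c_{x_k}`. -/
theorem pi_facts {E : Type*} [NormedAddCommGroup E] [NormedSpace ℝ E] [MeasurableSpace E]
    [BorelSpace E] [SecondCountableTopology E] {l : ℕ} (A : E →L[ℝ] E) (hinj : Function.Injective A)
    (hA : ‖A‖ < 1) (c : Fin l → E) {K : Set E} (hK : IsCompact K) (π : Sig l → E)
    (hπ : ∀ x, (⋂ n, itIm (fun i x => A x + c i) K x n) = {π x}) :
    (∀ x, π x ∈ K) ∧ (∀ x, π x = A (π (shift x)) + c (x 0)) ∧ Measurable π := by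
  have hmem : ∀ x n, π x ∈ itIm (fun i x => A x + c i) K x n := fun x => by
    rw [← mem_iInter, hπ]; rfl
  have hKm : ∀ x, π x ∈ K := fun x => hmem x 0
  have hrec : ∀ x, π x = A (π (shift x)) + c (x 0) := by
    intro x
    obtain ⟨y, -, hy⟩ := hmem x 1
    have : y ∈ ⋂ n, itIm (fun i x => A x + c i) K (shift x) n := by
      refine mem_iInter.2 fun n => ?_
      obtain ⟨z, hz, hzy⟩ := hmem x (n + 1)
      have : z = y := hinj (add_right_cancel (hzy.trans hy.symm))
      exact this ▸ hz
    rw [hπ] at this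
    rw [← mem_singleton_iff.1 this]; exact hy.symm
  refine ⟨hKm, hrec, ?_⟩
  have hit : ∀ (n : ℕ) (x : Sig l),
      π x = ∑ k ∈ Finset.range n, (A ^ k) (c (x k)) + (A ^ n) (π (shift^[n] x)) := by
    intro n
    induction n with
    | zero => intro x; simp
    | succ n ih =>
      intro x
      conv_lhs => rw [hrec x, ih (shift x)]
      rw [Finset.sum_range_succ', map_add, map_sum, Function.iterate_succ_apply]
      simp only [pow_succ', mul_apply_eq_comp]
      simp [shift]; abel
  obtain ⟨R, hR⟩ := hK.isBounded.exists_norm_le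
  refine measurable_of_tendsto_metrizable (f := fun n x => ∑ k ∈ Finset.range n, (A ^ k) (c (x k)))
    (fun n => ?_) (tendsto_pi_nhds.2 fun x => ?_)
  · refine Finset.measurable_fun_sum _ fun k _ => ?_
    exact (measurable_of_finite fun i => (A ^ k) (c i)).comp (measurable_pi_apply k)
  · rw [tendsto_iff_norm_sub_tendsto_zero]
    have hlim : Tendsto (fun n => ‖A‖ ^ n * R) atTop (nhds 0) := by
      simpa using (tendsto_pow_atTop_nhds_zero_of_lt_one (norm_nonneg A) hA).mul_const R
    refine squeeze_zero (fun _ => norm_nonneg _) (fun n => ?_) hlim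
    have : ∑ k ∈ Finset.range n, (A ^ k) (c (x k)) - π x = -(A ^ n) (π (shift^[n] x)) := by
      conv_lhs => rw [hit n x]
      abel
    rw [this, norm_neg]
    exact (norm_pow_apply_le A n _).trans (by gcongr; exact hR _ (hKm _))

/-- The partition function, indexed by the lattice points `⌊Bⁿ π(x)⌋`. -/
theorem Zsum_eq {d l : ℕ} (A B : EuclideanSpace ℝ (Fin d) →L[ℝ] EuclideanSpace ℝ (Fin d))
    (hAB : ∀ v, A (B v) = v) (hBA : ∀ v, B (A v) = v) {K : Set (EuclideanSpace ℝ (Fin d))}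
    (π : Sig l → EuclideanSpace ℝ (Fin d)) (hK : ∀ x, π x ∈ K)
    (f : EuclideanSpace ℝ (Fin d) → ℝ) (n : ℕ) :
    Zsum A K π f n
      = ∑' a, wt (fun x => fl ((B ^ n) (π x))) (birk (fun y => f (π y)) n) a := by
  refine tsum_congr fun a => iSup_congr fun x => ?_
  have : x ∈ π ⁻¹' ((⇑(A ^ n) '' cube d a) ∩ K) ↔ fl ((B ^ n) (π x)) = a := by
    simp only [mem_preimage, mem_inter_iff, hK x, and_true]
    have hc : ∀ v, v ∈ cube d a ↔ fl v = a := fun v => by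
      rw [funext_iff]
      exact forall_congr' fun i => Int.floor_eq_iff.symm
    constructor
    · rintro ⟨y, hy, hyx⟩
      rw [← hyx, pow_apply_pow_apply B A hBA]; exact (hc y).1 hy
    · intro h
      exact ⟨_, (hc _).2 h, pow_apply_pow_apply A B hAB n _⟩
  rw [this]

/-! ### Growth rate of the averaged entropy -/

/-- Averaging `condEnt_converge` over translations and summing over the first-coordinate
cylinders. -/
theorem condEnt_lintegral_tendsto {d l : ℕ} (μ : Measure (Sig l)) [IsProbabilityMeasure μ]
    (τ : Measure (EuclideanSpace ℝ (Fin d))) [IsProbabilityMeasure τ]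
    (A B : EuclideanSpace ℝ (Fin d) →L[ℝ] EuclideanSpace ℝ (Fin d))
    (hAB : ∀ v, A (B v) = v) (hA : ‖A‖ < 1)
    (θ : Sig l → EuclideanSpace ℝ (Fin d)) (hθ : Measurable θ) :
    Tendsto (fun n : ℕ => (∫⁻ t, ENNReal.ofReal (condEnt μ cylP
        (MeasurableSpace.comap (fun x => fl ((B ^ n) (θ x) + t)) inferInstance)) ∂τ).toReal) atTop
      (nhds (condEnt μ cylP (MeasurableSpace.comap θ inferInstance))) := by
  have hnn := (condEnt_mem_Icc hθ.comap_le μ cylP cylP_measurable).1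
  rw [Metric.tendsto_atTop']
  intro ε hε
  have hε' : 0 < ε / (2 * (l + 1)) := by positivity
  have h : ∀ i : Fin l, _ := fun i =>
    condEnt_converge μ (cylP_measurable i) A B hAB hA θ hθ hε'
  obtain ⟨N, hN⟩ := eventually_atTop.1 (eventually_all.2 h)
  refine ⟨N, fun n hn => ?_⟩
  rw [Real.dist_eq]
  refine (abs_toReal_lintegral_sub_le τ _ hnn (ε := ε / 2) fun t => ?_).trans_lt (half_lt_self hε)
  rw [condEnt, condEnt, ← Finset.sum_sub_distrib]
  refine (Finset.abs_sum_le_sum_abs _ _).trans ?_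
  refine (Finset.sum_le_card_nsmul _ _ _ fun i _ => hN n hn.le i t).trans ?_
  rw [Finset.card_univ, Fintype.card_fin, nsmul_eq_mul, mul_div_assoc',
    div_le_div_iff₀ (by positivity) (by norm_num)]
  nlinarith

/-- The averaged entropy of the level-`n` lattice partition grows linearly, at rate `h_π(σ,μ)`. -/
theorem entropy_div_tendsto {d l : ℕ} (μ : Measure (Sig l)) [IsProbabilityMeasure μ]
    (hμ : Measure.map shift μ = μ) (τ : Measure (EuclideanSpace ℝ (Fin d)))
    [IsProbabilityMeasure τ]
    (hτ : ∀ F : EuclideanSpace ℝ (Fin d) → ENNReal,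
      (∀ (k : Fin d → ℤ) (t w : EuclideanSpace ℝ (Fin d)), (∀ i, w i = t i + k i) → F w = F t) →
      ∀ s, ∫⁻ t, F (t + s) ∂τ = ∫⁻ t, F t ∂τ)
    (A B : EuclideanSpace ℝ (Fin d) →L[ℝ] EuclideanSpace ℝ (Fin d)) (hAB : ∀ v, A (B v) = v)
    (hBA : ∀ v, B (A v) = v) (hA : ‖A‖ < 1)
    (c : Fin l → EuclideanSpace ℝ (Fin d)) (π : Sig l → EuclideanSpace ℝ (Fin d))
    (hπm : Measurable π) (hπ : ∀ x, π x = A (π (shift x)) + c (x 0))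
    (hfin : ∀ n : ℕ, ∫⁻ t, discEntropy μ univ (fun x => fl ((B ^ n) (π x) + t)) ∂τ ≠ ⊤) :
    Tendsto (fun n : ℕ =>
        (∫⁻ t, discEntropy μ univ (fun x => fl ((B ^ n) (π x) + t)) ∂τ).toReal / n) atTop
      (nhds (projEntropy π μ)) := by
  have hπs : Measurable fun x => π (shift x) := hπm.comp measurable_shift
  set g : ℕ → ℝ := fun n =>
    (∫⁻ t, discEntropy μ univ (fun x => fl ((B ^ n) (π x) + t)) ∂τ).toReal with hg
  have hJfin : ∀ (n : ℕ) {θ : Sig l → EuclideanSpace ℝ (Fin d)}, Measurable θ →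
      ∫⁻ t, ENNReal.ofReal (condEnt μ cylP
        (MeasurableSpace.comap (fun x => fl ((B ^ n) (θ x) + t)) inferInstance)) ∂τ ≠ ⊤ := by
    intro n θ hθ
    refine ne_top_of_le_ne_top (b := ENNReal.ofReal l) ENNReal.ofReal_ne_top ?_
    calc _ ≤ ∫⁻ _, ENNReal.ofReal l ∂τ := lintegral_mono fun t => by
          have hm : Measurable fun x => fl ((B ^ n) (θ x) + t) :=
            (measurable_fl d).comp (((B ^ n).continuous.measurable.comp hθ).add_const t)
          have := (condEnt_mem_Icc hm.comap_le μ cylP cylP_measurable).2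
          rw [Fintype.card_fin] at this
          exact ENNReal.ofReal_le_ofReal this
      _ = _ := by simp
  have hdiff : Tendsto (fun n => g (n + 1) - g n) atTop (nhds (projEntropy π μ)) := by
    have h1 := condEnt_lintegral_tendsto μ τ A B hAB hA _ hπs
    have h2 := (condEnt_lintegral_tendsto μ τ A B hAB hA _ hπm).comp (tendsto_add_atTop_nat 1)
    have h3 := h1.sub h2
    rw [projEntropy, condEntropyPart_eq hπs.comap_le μ _ cylP_measurable,
      condEntropyPart_eq hπm.comap_le μ _ cylP_measurable]
    refine h3.congr fun n => ?_
    have h4 := congrArg ENNReal.toReal (entropy_step μ hμ τ hτ A B hBA c π hπm hπ n)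
    rw [ENNReal.toReal_add (hfin _) (hJfin _ hπm), ENNReal.toReal_add (hfin _) (hJfin _ hπs)] at h4
    simp only [hg, Function.comp]
    linarith
  have h1 := hdiff.cesaro
  simp_rw [Finset.sum_range_sub] at h1
  have h2 : Tendsto (fun n : ℕ => (n : ℝ)⁻¹ * g 0) atTop (nhds 0) := by
    simpa using (tendsto_inv_atTop_nhds_zero_nat (𝕜 := ℝ)).mul_const (g 0)
  have h3 := h1.add h2
  rw [add_zero] at h3
  refine h3.congr fun n => ?_
  ring

theorem integral_birk {l : ℕ} (μ : Measure (Sig l)) [IsProbabilityMeasure μ]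
    (hμ : Measure.map shift μ = μ) {g : Sig l → ℝ} (hg : Integrable g μ) (n : ℕ) :
    Integrable (birk g n) μ ∧ ∫ x, birk g n x ∂μ = n * ∫ x, g x ∂μ := by
  have hmp : ∀ i, MeasurePreserving ((shift (l := l))^[i]) μ μ :=
    fun i => (MeasurePreserving.mk measurable_shift hμ).iterate i
  have hi : ∀ i, Integrable (fun x => g (shift^[i] x)) μ := fun i =>
    (hmp i).integrable_comp_of_integrable hg
  have he : ∀ i, ∫ x, g (shift^[i] x) ∂μ = ∫ x, g x ∂μ := fun i => by
    have := integral_map (μ := μ) (hmp i).measurable.aemeasurable (f := g)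
      (by rw [(hmp i).map_eq]; exact hg.aestronglyMeasurable)
    rw [← this, (hmp i).map_eq]
  refine ⟨integrable_finsetSum _ fun i _ => hi i, ?_⟩
  simp only [birk]
  rw [integral_finsetSum _ fun i _ => hi i]
  simp [he]

/-! ### The lower bound -/

/-- **Step 1 of Theorem 2.1**: for the affine IFS `S_i x = A x + c_i` with `‖A‖ < 1`,
attractor `K` and canonical projection `π`, and every continuous `f`,
`liminf_n (1/n) log ∑_{Q ∈ 𝒬_n, Q∩K≠∅} sup_{α ∈ π⁻¹(Q∩K)} e^{(S_n f∘π)(α)}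
  ≥ sup { h_π(σ,m) + ∫ f∘π dm : m ∈ M_σ(Σ) }`. -/
theorem projection_pressure_liminf_ge {d l : ℕ} (hl : 0 < l)
    (A : EuclideanSpace ℝ (Fin d) →L[ℝ] EuclideanSpace ℝ (Fin d))
    (hAbij : Function.Bijective A) (hAnorm : ‖A‖ < 1)
    (c : Fin l → EuclideanSpace ℝ (Fin d))
    (K : Set (EuclideanSpace ℝ (Fin d))) (hKcomp : IsCompact K) (hKne : K.Nonempty)
    (hKattr : K = ⋃ i, (fun x => A x + c i) '' K)
    (π : Sig l → EuclideanSpace ℝ (Fin d))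
    (hπ : ∀ x, (⋂ n, itIm (fun i x => A x + c i) K x n) = {π x})
    (f : EuclideanSpace ℝ (Fin d) → ℝ) (hf : Continuous f) :
    sSup {r : ℝ | ∃ μ : Measure (Sig l), IsProbabilityMeasure μ ∧
        Measure.map shift μ = μ ∧ r = projEntropy π μ + ∫ x, f (π x) ∂μ}
      ≤ liminf (fun n : ℕ => Real.log (Zsum A K π f n) / n) atTop := by
  obtain ⟨hπK, hrec, hπm⟩ := pi_facts A hAbij.1 hAnorm c hKcomp π hπ
  obtain ⟨B, hAB, hBA⟩ : ∃ B : EuclideanSpace ℝ (Fin d) →L[ℝ] EuclideanSpace ℝ (Fin d),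
      (∀ v, A (B v) = v) ∧ ∀ v, B (A v) = v := by
    let e := LinearEquiv.ofBijective (A : EuclideanSpace ℝ (Fin d) →ₗ[ℝ] EuclideanSpace ℝ (Fin d))
      hAbij
    exact ⟨LinearMap.toContinuousLinearMap (e.symm : _ →ₗ[ℝ] _), e.apply_symm_apply,
      e.symm_apply_apply⟩
  obtain ⟨R, hR⟩ := hKcomp.isBounded.exists_norm_le
  obtain ⟨M, hM⟩ := hKcomp.exists_bound_of_continuousOn hf.continuousOn
  let x₀ : Sig l := fun _ => ⟨0, hl⟩
  let b : ℕ := ⌈‖B‖⌉₊ + 1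
  -- `m n` bounds `‖Bⁿ π(x)‖`, and `2 * m n + 1 ≤ L ^ n` for `n ≥ 1`; hence at most
  -- `L ^ (n * d)` cubes of the level-`n` partition meet `K`
  let m : ℕ → ℕ := fun n => ⌈R⌉₊ * b ^ n
  let L : ℕ := (2 * ⌈R⌉₊ + 1) * b
  have hm : ∀ n x, ‖(B ^ n) (π x)‖ ≤ m n := by
    intro n x
    refine (norm_pow_apply_le B n _).trans ?_
    rw [mul_comm]
    push_cast [m, b]
    have h1 : ‖π x‖ ≤ ⌈R⌉₊ := (hR _ (hπK x)).trans (Nat.le_ceil R)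
    have h2 : ‖B‖ ≤ (⌈‖B‖⌉₊ : ℝ) + 1 := (Nat.le_ceil _).trans (by linarith)
    gcongr
  let F : ℕ → Finset (Fin d → ℤ) := fun n =>
    Finset.Icc (fun _ => -(m n : ℤ)) (fun _ => (m n : ℤ))
  have hF : ∀ n x, fl ((B ^ n) (π x)) ∈ F n := fun n x => fl_mem_Icc _ _ (hm n x)
  let φ : ℕ → Sig l → ℝ := birk fun y => f (π y)
  have hφM : ∀ n x, φ n x ≤ n * M := by
    intro n x
    have := Finset.sum_le_card_nsmul (Finset.range n) (fun i => f (π (shift^[i] x))) M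
      fun i _ => (le_abs_self _).trans (hM _ (hπK _))
    simpa [φ, birk] using this
  have hZ := Zsum_eq A B hAB hBA π hπK f
  have hZF : ∀ n, Zsum A K π f n = ∑ a ∈ F n, wt (fun x => fl ((B ^ n) (π x))) (φ n) a := by
    intro n
    rw [hZ]
    exact tsum_eq_sum fun a ha => wt_eq_zero _ _ (hF n) ha
  have hZpos : ∀ n, 0 < Zsum A K π f n := by
    intro n
    rw [hZF]
    exact (Real.exp_pos _).trans_le ((le_wt _ _ (hφM n) x₀).trans
      (Finset.single_le_sum (f := wt (fun x => fl ((B ^ n) (π x))) (φ n))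
        (fun a _ => wt_nonneg _ _ _) (hF n x₀)))
  have hZup : ∀ n, n ≠ 0 → Real.log (Zsum A K π f n) / n ≤ d * Real.log L + M := by
    intro n hn
    have hL : 0 < L := by positivity
    have h1 : Zsum A K π f n ≤ ((L : ℝ) ^ n) ^ d * Real.exp (n * M) := by
      rw [hZF]
      refine (Finset.sum_le_card_nsmul _ _ _ fun a _ => wt_le _ _ (hφM n) a).trans ?_
      rw [nsmul_eq_mul]
      have hcard : (F n).card = (2 * m n + 1) ^ d := by
        simp only [F, Pi.card_Icc, Int.card_Icc, Finset.prod_const, Finset.card_univ,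
          Fintype.card_fin]
        congr 1; omega
      have hle : 2 * m n + 1 ≤ L ^ n := by
        have hb : 1 ≤ b ^ n := Nat.one_le_pow _ _ (by positivity)
        calc 2 * m n + 1 ≤ (2 * ⌈R⌉₊ + 1) * b ^ n := by
              simp only [m]; nlinarith
          _ ≤ (2 * ⌈R⌉₊ + 1) ^ n * b ^ n := by
              gcongr; exact Nat.le_self_pow hn _
          _ = L ^ n := (mul_pow _ _ _).symm
      rw [hcard]
      gcongr
      exact_mod_cast Nat.pow_le_pow_left hle d
    have h2 := Real.log_le_log (hZpos n) h1
    rw [Real.log_mul (by positivity) (Real.exp_pos _).ne', Real.log_exp, Real.log_pow,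
      Real.log_pow] at h2
    have hn' : (0 : ℝ) < n := by positivity
    rw [div_le_iff₀ hn']
    linarith
  -- without an upper bound the real `liminf` would take a junk value
  have hcob : IsCoboundedUnder (· ≥ ·) atTop
      (fun n : ℕ => Real.log (Zsum A K π f n) / n) := by
    refine IsBoundedUnder.isCoboundedUnder_ge ⟨d * Real.log L + M, ?_⟩
    rw [eventually_map]
    filter_upwards [eventually_ne_atTop 0] with n hn using hZup n hn
  refine csSup_le ?_ ?_
  -- the set of values is nonempty: the point mass at a constant sequence is invariant
  · refine ⟨_, Measure.dirac x₀, inferInstance, ?_, rfl⟩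
    rw [Measure.map_dirac' measurable_shift]; rfl
  rintro r ⟨μ, hμp, hμ, rfl⟩
  obtain ⟨τ, hτp, hτ01, hτ⟩ := exists_torus_measure d
  have hfi : Integrable (fun x => f (π x)) μ :=
    Integrable.of_bound (hf.measurable.comp hπm).aestronglyMeasurable M
      (Eventually.of_forall fun x => hM _ (hπK x))
  have hdisc : ∀ n, ∀ᵐ t ∂τ, discEntropy μ univ (fun x => fl ((B ^ n) (π x) + t))
      ≤ ENNReal.ofReal (Real.log (2 ^ d * Zsum A K π f n) - n * ∫ x, f (π x) ∂μ) ∧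
      0 ≤ Real.log (2 ^ d * Zsum A K π f n) - n * ∫ x, f (π x) ∂μ := by
    intro n
    obtain ⟨hi, he⟩ := integral_birk μ hμ hfi n
    filter_upwards [hτ01] with t ht
    rw [hZ, ← he]
    exact discEntropy_le μ ((B ^ n).continuous.measurable.comp hπm) hi (hφM n) (hF n) ht
  have hG : ∀ n, ∫⁻ t, discEntropy μ univ (fun x => fl ((B ^ n) (π x) + t)) ∂τ
      ≤ ENNReal.ofReal (Real.log (2 ^ d * Zsum A K π f n) - n * ∫ x, f (π x) ∂μ) := by
    intro n
    refine (lintegral_mono_ae ((hdisc n).mono fun t h => h.1)).trans_eq ?_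
    simp
  have hlim := entropy_div_tendsto μ hμ τ hτ A B hAB hBA hAnorm c π hπm hrec
    fun n => ne_top_of_le_ne_top ENNReal.ofReal_ne_top (hG n)
  have hlim2 : Tendsto (fun n : ℕ => (n : ℝ)⁻¹ * (d * Real.log 2)) atTop (nhds 0) := by
    simpa using (tendsto_inv_atTop_nhds_zero_nat (𝕜 := ℝ)).mul_const (d * Real.log 2)
  have hlim3 := (hlim.add_const (∫ x, f (π x) ∂μ)).sub hlim2
  rw [sub_zero] at hlim3
  refine le_of_forall_lt fun r hr => ?_
  obtain ⟨r', hr', hr''⟩ := exists_between hr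
  refine hr'.trans_le (le_liminf_of_le hcob ?_)
  filter_upwards [hlim3.eventually (lt_mem_nhds hr''), eventually_ne_atTop 0] with n h hn
  refine h.le.trans ?_
  obtain ⟨t, -, ht⟩ := (hdisc n).exists
  have h1 := ENNReal.toReal_le_of_le_ofReal ht (hG n)
  rw [Real.log_mul (by positivity) (hZpos n).ne', Real.log_pow] at h1
  have hn' : (0 : ℝ) < n := by positivity
  have h2 : (∫⁻ t, discEntropy μ univ (fun x => fl ((B ^ n) (π x) + t)) ∂τ).toReal / n
      ≤ (d * Real.log 2 + Real.log (Zsum A K π f n) - n * ∫ x, f (π x) ∂μ) / n := by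
    gcongr
  have h3 : (d * Real.log 2 + Real.log (Zsum A K π f n) - n * ∫ x, f (π x) ∂μ) / n
      = Real.log (Zsum A K π f n) / n - ∫ x, f (π x) ∂μ + (n : ℝ)⁻¹ * (d * Real.log 2) := by
    field_simp; ring
  linarith

end
end

section
/- Let A be a d×d non-singular real matrix, let Q_n = {A^n Q : Q ∈ Q} where Q = {[0,1)^d + α : α ∈ ℤ^d}, and let K ⊂ ℝ^d be a nonempty compact set. For Q ∈ Q_n set 2Q = ⋃{P ∈ Q_n : cl(P) ∩ cl(Q) ≠ ∅}. Let g : K → (0,∞) be upper semicontinuous, and for each Q ∈ Q_n with Q ∩ K ≠ ∅ set g(Q) = sup_{x ∈ Q ∩ K} g(x). Then there exists a finite subset Γ of {Q ∈ Q_n : Q ∩ K ≠ ∅} such that (i) Σ_{Q ∈ Γ} g(Q) ≥ 7^{−d} · Σ_{Q ∈ Q_n, Q ∩ K ≠ ∅} g(Q), and (ii) 2Q ∩ 2Q̃ = ∅ for all distinct Q, Q̃ ∈ Γ. -/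
/-!
Colour the index `α ∈ ℤ^d` of each element of `𝒬_n` by its residue in `(ℤ/7ℤ)^d`. Two cubes whose
closures meet have indices at sup-distance at most `1` (`abs_sub_le_one_of_closure_inter`), and
distinct cubes are disjoint (`eq_of_mem_Qcube`), so `2Q ∩ 2Q̃ ≠ ∅` forces the indices of `Q` and `Q̃`
to be at sup-distance at most `2`; two such indices of the same colour coincide. As only finitely
many cubes meet `K` (`finite_Qcube_inter`), and there are `7^d` colours, the colour class carrying
the largest share of `∑ g(Q)` carries at least the fraction `7^{-d}` of it; take it as `Γ`.
-/

/- The covering claim inside Step 2 of Theorem 2.1 (Wang–Chen):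
   a `7^{-d}`-dense subfamily of cubes with disjoint doubled neighbourhoods. -/

open Set

noncomputable section

/-- The element `Aⁿ([0,1)^d + α)` of the partition `𝒬_n = {Aⁿ Q : Q ∈ 𝒬}`. -/
def Qcube {d : ℕ} (A : EuclideanSpace ℝ (Fin d) →L[ℝ] EuclideanSpace ℝ (Fin d))
    (n : ℕ) (α : Fin d → ℤ) : Set (EuclideanSpace ℝ (Fin d)) :=
  ⇑(A ^ n) '' cube d α

/-- `2Q = ⋃ {P ∈ 𝒬_n : cl(P) ∩ cl(Q) ≠ ∅}` for `Q = Aⁿ([0,1)^d + α)`. -/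
def twoQ {d : ℕ} (A : EuclideanSpace ℝ (Fin d) →L[ℝ] EuclideanSpace ℝ (Fin d))
    (n : ℕ) (α : Fin d → ℤ) : Set (EuclideanSpace ℝ (Fin d)) :=
  ⋃ β ∈ {β : Fin d → ℤ | (closure (Qcube A n β) ∩ closure (Qcube A n α)).Nonempty},
    Qcube A n β

/-- `g(Q) = sup_{x ∈ Q ∩ K} g(x)`. -/
def supOn {d : ℕ} (g : EuclideanSpace ℝ (Fin d) → ℝ) (K : Set (EuclideanSpace ℝ (Fin d)))
    (Q : Set (EuclideanSpace ℝ (Fin d))) : ℝ :=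
  sSup (g '' (Q ∩ K))

/-- `Aⁿ` is a homeomorphism: a linear bijection of a finite-dimensional space has a continuous
inverse. -/
lemma exists_homeo_pow {d : ℕ}
    (A : EuclideanSpace ℝ (Fin d) →L[ℝ] EuclideanSpace ℝ (Fin d))
    (hA : Function.Bijective A) (n : ℕ) :
    ∃ e : EuclideanSpace ℝ (Fin d) ≃ₜ EuclideanSpace ℝ (Fin d), ∀ x, e x = (A ^ n) x := by
  have hb : Function.Bijective (A ^ n) := by
    have h : ⇑(A ^ n) = A^[n] := hom_coe_pow _ rfl (fun _ _ => rfl) A n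
    rw [h]
    exact hA.iterate n
  exact ⟨(LinearEquiv.ofBijective (A ^ n).toLinearMap hb).toContinuousLinearEquiv.toHomeomorph,
    fun x => rfl⟩

/-- Images of integer cubes whose closures meet have indices at sup-distance at most one. -/
lemma abs_sub_le_one_of_closure_inter {d : ℕ}
    (A : EuclideanSpace ℝ (Fin d) →L[ℝ] EuclideanSpace ℝ (Fin d))
    (hA : Function.Bijective A) (n : ℕ) (α β : Fin d → ℤ)
    (h : (closure (Qcube A n α) ∩ closure (Qcube A n β)).Nonempty) (i : Fin d) :
    |α i - β i| ≤ 1 := by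
  obtain ⟨e, he⟩ := exists_homeo_pow A hA n
  have hQ : ∀ γ : Fin d → ℤ, Qcube A n γ = e '' cube d γ := fun γ =>
    image_congr fun x _ => (he x).symm
  have hcl : ∀ γ : Fin d → ℤ, ∀ x ∈ closure (cube d γ), (γ i : ℝ) ≤ x i ∧ x i ≤ (γ i : ℝ) + 1 := by
    intro γ x hx
    have hc : IsClosed {x : EuclideanSpace ℝ (Fin d) | (γ i : ℝ) ≤ x i ∧ x i ≤ (γ i : ℝ) + 1} :=
      (isClosed_le continuous_const (by fun_prop : Continuous fun x : EuclideanSpace ℝ (Fin d) => x i)).inter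
        (isClosed_le (by fun_prop : Continuous fun x : EuclideanSpace ℝ (Fin d) => x i) continuous_const)
    have hsub : cube d γ ⊆ {x | (γ i : ℝ) ≤ x i ∧ x i ≤ (γ i : ℝ) + 1} :=
      fun y hy => ⟨(hy i).1, (hy i).2.le⟩
    exact closure_minimal hsub hc hx
  obtain ⟨y, hy⟩ := h
  rw [hQ, hQ, ← e.image_closure, ← e.image_closure] at hy
  obtain ⟨⟨x, hx, rfl⟩, x', hx', hxx⟩ := hy
  obtain rfl := e.injective hxx
  obtain ⟨h1, h2⟩ := hcl α _ hx
  obtain ⟨h3, h4⟩ := hcl β _ hx'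
  have h5 : α i ≤ β i + 1 := by exact_mod_cast h1.trans h4
  have h6 : β i ≤ α i + 1 := by exact_mod_cast h3.trans h2
  rw [abs_le]
  omega

/-- The sets `Aⁿ([0,1)^d + α)` are pairwise disjoint. -/
lemma eq_of_mem_Qcube {d : ℕ}
    (A : EuclideanSpace ℝ (Fin d) →L[ℝ] EuclideanSpace ℝ (Fin d))
    (hA : Function.Bijective A) (n : ℕ) (α β : Fin d → ℤ) (y : EuclideanSpace ℝ (Fin d))
    (hα : y ∈ Qcube A n α) (hβ : y ∈ Qcube A n β) : α = β := by
  obtain ⟨e, he⟩ := exists_homeo_pow A hA n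
  obtain ⟨x, hx, rfl⟩ := hα
  obtain ⟨x', hx', hxx⟩ := hβ
  rw [← he, ← he] at hxx
  obtain rfl := e.injective hxx
  funext i
  rw [← Int.floor_eq_iff.2 (hx i), Int.floor_eq_iff.2 (hx' i)]

/-- Only finitely many elements of `𝒬_n` meet a compact set: pull back by `Aⁿ` and bound the
integer parts of the coordinates. -/
lemma finite_Qcube_inter {d : ℕ}
    (A : EuclideanSpace ℝ (Fin d) →L[ℝ] EuclideanSpace ℝ (Fin d))
    (hA : Function.Bijective A) (n : ℕ) (K : Set (EuclideanSpace ℝ (Fin d)))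
    (hK : IsCompact K) : {β : Fin d → ℤ | (Qcube A n β ∩ K).Nonempty}.Finite := by
  obtain ⟨e, he⟩ := exists_homeo_pow A hA n
  obtain ⟨R, hR⟩ := ((e.isCompact_preimage).2 hK).isBounded.exists_norm_le
  refine (finite_Icc (fun _ : Fin d => ⌊-R⌋) (fun _ => ⌊R⌋)).subset ?_
  rintro β ⟨y, ⟨x, hx, rfl⟩, hy⟩
  have hxR : ‖x‖ ≤ R := hR x (by rw [mem_preimage, he]; exact hy)
  have hi : ∀ i, ⌊-R⌋ ≤ β i ∧ β i ≤ ⌊R⌋ := by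
    intro i
    have h := abs_le.1 ((PiLp.norm_apply_le x i).trans hxR)
    rw [← Int.floor_eq_iff.2 (hx i)]
    exact ⟨Int.floor_le_floor h.1, Int.floor_le_floor h.2⟩
  exact ⟨fun i => (hi i).1, fun i => (hi i).2⟩

/-- **Covering claim.** Let `A` be a non-singular `d×d` matrix, `𝒬_n = {AⁿQ : Q ∈ 𝒬}`,
`K ⊆ ℝ^d` nonempty compact, and `g : K → (0,∞)` upper semicontinuous. Then there is a
finite subfamily `Γ` of `{Q ∈ 𝒬_n : Q ∩ K ≠ ∅}` with
(i) `∑_{Q ∈ Γ} g(Q) ≥ 7^{-d} ∑_{Q ∈ 𝒬_n, Q∩K≠∅} g(Q)` and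
(ii) `2Q ∩ 2Q̃ = ∅` for distinct `Q, Q̃ ∈ Γ`. -/
theorem covering_claim {d : ℕ}
    (A : EuclideanSpace ℝ (Fin d) →L[ℝ] EuclideanSpace ℝ (Fin d))
    (hAbij : Function.Bijective A) (n : ℕ)
    (K : Set (EuclideanSpace ℝ (Fin d))) (hKcomp : IsCompact K) (hKne : K.Nonempty)
    (g : EuclideanSpace ℝ (Fin d) → ℝ)
    (hg : UpperSemicontinuousOn g K) (hgpos : ∀ x ∈ K, 0 < g x) :
    ∃ Γ : Finset (Fin d → ℤ),
      (∀ α ∈ Γ, (Qcube A n α ∩ K).Nonempty) ∧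
      ((∑' β : {β : Fin d → ℤ // (Qcube A n β ∩ K).Nonempty},
          supOn g K (Qcube A n β.1)) / 7 ^ d
        ≤ ∑ α ∈ Γ, supOn g K (Qcube A n α)) ∧
      (∀ α ∈ Γ, ∀ β ∈ Γ, α ≠ β → twoQ A n α ∩ twoQ A n β = ∅) := by
  classical
  have hfin := finite_Qcube_inter A hAbij n K hKcomp
  let S : Finset (Fin d → ℤ) := hfin.toFinset
  let w : (Fin d → ℤ) → ℝ := fun β => supOn g K (Qcube A n β)
  have htsum : (∑' β : {β : Fin d → ℤ // (Qcube A n β ∩ K).Nonempty},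
      supOn g K (Qcube A n β.1)) = ∑ β ∈ S, w β := by
    rw [← Finset.tsum_subtype]
    exact (Equiv.subtypeEquivRight (fun β => by simp [S])).tsum_eq
      (fun β : {β // β ∈ S} => w β.1)
  let colour : (Fin d → ℤ) → (Fin d → ZMod 7) := fun β i => (β i : ZMod 7)
  obtain ⟨c, -, hc⟩ : ∃ c ∈ (Finset.univ : Finset (Fin d → ZMod 7)),
      (∑ β ∈ S, w β) / 7 ^ d ≤ ∑ β ∈ S with colour β = c, w β := by
    refine Finset.exists_le_of_sum_le Finset.univ_nonempty ?_
    -- The `7^d` class sums add up to `∑ β ∈ S, w β`, so one is at least the average.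
    rw [Finset.sum_fiberwise, Finset.sum_const, Finset.card_univ, Fintype.card_fun,
      ZMod.card, Fintype.card_fin, nsmul_eq_mul, Nat.cast_pow, Nat.cast_ofNat]
    exact (mul_div_cancel₀ _ (by positivity)).le
  refine ⟨S.filter (fun β => colour β = c), ?_, ?_, ?_⟩
  · intro α hα
    simpa [S] using (Finset.mem_filter.1 hα).1
  · rw [htsum]
    exact hc
  · intro α hα β hβ hne
    by_contra hcon
    obtain ⟨y, hy⟩ := nonempty_iff_ne_empty.2 hcon
    simp only [twoQ, mem_inter_iff, mem_iUnion, mem_ofPred_eq, exists_prop] at hy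
    obtain ⟨⟨γ, hγ, hyγ⟩, δ, hδ, hyδ⟩ := hy
    obtain rfl := eq_of_mem_Qcube A hAbij n γ δ y hyγ hyδ
    -- `γ` is within `1` of both `α` and `β`, so `|α i - β i| ≤ 2`, while `7 ∣ β i - α i`.
    apply hne
    funext i
    have h1 := abs_le.1 (abs_sub_le_one_of_closure_inter A hAbij n γ α hγ i)
    have h2 := abs_le.1 (abs_sub_le_one_of_closure_inter A hAbij n γ β hδ i)
    have h3 : ((α i : ℤ) : ZMod 7) = (β i : ZMod 7) :=
      congrFun ((Finset.mem_filter.1 hα).2.trans (Finset.mem_filter.1 hβ).2.symm) i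
    have h4 := (ZMod.intCast_eq_intCast_iff_dvd_sub _ _ 7).1 h3
    omega
end
end
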